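/- There exists u ∈ H¹(ℝ³; ℝ) with ‖u‖_{L²} = 1 such that ℰ(u) < 0, where ℰ(u) := ∫_{ℝ³} |∇u(x)|² dx − (1/(4π)) ∬_{ℝ³×ℝ³} |u(x)|² |u(y)|² / |x−y| dx dy. In particular the Pekar energy e^{Pek} := inf{ ℰ(u) : u ∈ H¹(ℝ³;ℝ), ‖u‖_{L²} = 1 } satisfies e^{Pek} < 0. -/

import Mathlib

open MeasureTheory Real

noncomputable section

/-- The electronic Pekar functional
`ℰ(u,u') = ∫|∇u|² − (1/(4π)) ∬ |u(x)|²|u(y)|²/|x−y|`, where `u'` is the weak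
gradient of `u`. -/
def pekarFunctional (u : EuclideanSpace ℝ (Fin 3) → ℝ)
    (u' : Fin 3 → EuclideanSpace ℝ (Fin 3) → ℝ) : ℝ :=
  (∫ x, ∑ i, u' i x ^ 2) -
    (1 / (4 * π)) * ∫ x, ∫ y, u x ^ 2 * u y ^ 2 / ‖x - y‖

/-- `u ∈ H¹(ℝ³;ℝ)` with weak gradient `u'` and `‖u‖_{L²} = 1`. -/
def IsNormalizedH1 (u : EuclideanSpace ℝ (Fin 3) → ℝ)
    (u' : Fin 3 → EuclideanSpace ℝ (Fin 3) → ℝ) : Prop :=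
  MemLp u 2 volume ∧ (∀ i, MemLp (u' i) 2 volume) ∧
    (∀ i, ∀ φ : EuclideanSpace ℝ (Fin 3) → ℝ,
      ContDiff ℝ (⊤ : ℕ∞) φ → HasCompactSupport φ →
      ∫ x, u x * fderiv ℝ φ x (EuclideanSpace.single i 1) = - ∫ x, u' i x * φ x) ∧
    (∫ x, u x ^ 2) = 1

/-!
Everything rests on the Coulomb bound `(d - 1) ∫ u² / |x| ≤ ‖u‖² + ‖∇u‖²` on a `d`-dimensional
Euclidean space. The radial unit field `F = x / |x|` has divergence `(d - 1) / |x|`, so integrating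
by parts and completing the square gives
`∫ u² div F = -2 ∫ u F · ∇u ≤ ∫ u² |F|² + ∫ |∇u|²`. The singularity of `F` is removed by replacing
`|x|` by `√(|x|² + ε²)`, the lack of regularity of `u` by mollification, and Fatou's lemma passes to
the limit. By translation, the Coulomb potential of `u²` is at most `(1 + ‖∇u‖²) / 2` for a
normalised `u` on `ℝ³`, so `ℰ(u) ≥ -1 / (8π)`. This lower bound is indispensable: in `ℝ` the `sInf`
of a set that is not bounded below has the junk value `0`.

For negativity, dilate a normalised smooth function supported in the unit ball by a factor `R`,
preserving its `L²` norm. The kinetic energy becomes `T / R²`, while any two points of the support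
are at distance at most `2 R`, so the Coulomb energy is at least `1 / (8πR)`, which wins for
large `R`.
-/

open Filter Topology Function Metric Module
open ContinuousLinearMap (lsmul)
open scoped Convolution ContDiff RealInnerProductSpace

section Integral

variable {α : Type*} [MeasurableSpace α] {μ : Measure α}

lemma integrable_and_integral_le_of_ae_tendsto {F : ℕ → α → ℝ} {f : α → ℝ} {C : ℝ}
    (hF : ∀ n, Integrable (F n) μ) (hF_nonneg : ∀ n x, 0 ≤ F n x)
    (hF_le : ∀ n, ∫ x, F n x ∂μ ≤ C)
    (hlim : ∀ᵐ x ∂μ, Tendsto (fun n ↦ F n x) atTop (𝓝 (f x))) :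
    Integrable f μ ∧ ∫ x, f x ∂μ ≤ C := by
  have hf : AEStronglyMeasurable f μ :=
    aestronglyMeasurable_of_tendsto_ae _ (fun n ↦ (hF n).1) hlim
  have hf_nonneg : 0 ≤ᵐ[μ] f := by
    filter_upwards [hlim] with x hx using ge_of_tendsto' hx fun n ↦ hF_nonneg n x
  have hC : 0 ≤ C := (integral_nonneg (hF_nonneg 0)).trans (hF_le 0)
  have fatou : ∫⁻ x, ENNReal.ofReal (f x) ∂μ ≤ ENNReal.ofReal C := calc
    ∫⁻ x, ENNReal.ofReal (f x) ∂μ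
      = ∫⁻ x, liminf (fun n ↦ ENNReal.ofReal (F n x)) atTop ∂μ := by
        refine lintegral_congr_ae ?_
        filter_upwards [hlim] with x hx using (ENNReal.tendsto_ofReal hx).liminf_eq.symm
    _ ≤ liminf (fun n ↦ ∫⁻ x, ENNReal.ofReal (F n x) ∂μ) atTop :=
        lintegral_liminf_le' fun n ↦ (hF n).1.aemeasurable.ennreal_ofReal
    _ ≤ ENNReal.ofReal C := by
        refine liminf_le_of_frequently_le' (Frequently.of_forall fun n ↦ ?_)
        rw [← ofReal_integral_eq_lintegral_ofReal (hF n) (.of_forall (hF_nonneg n))]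
        exact ENNReal.ofReal_le_ofReal (hF_le n)
  refine ⟨⟨hf, ?_⟩, ?_⟩
  · rw [hasFiniteIntegral_iff_ofReal hf_nonneg]
    exact fatou.trans_lt ENNReal.ofReal_lt_top
  · rw [integral_eq_lintegral_of_nonneg_ae hf_nonneg hf]
    exact ENNReal.toReal_le_of_le_ofReal hC fatou

lemma sq_integral_mul_le_integral_mul_sq {g f : α → ℝ} (hg : 0 ≤ g) (hg_one : ∫ x, g x ∂μ = 1)
    (hgf : Integrable (fun x ↦ g x * f x) μ) (hgf2 : Integrable (fun x ↦ g x * f x ^ 2) μ) :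
    (∫ x, g x * f x ∂μ) ^ 2 ≤ ∫ x, g x * f x ^ 2 ∂μ := by
  set m := ∫ x, g x * f x ∂μ
  have variance_nonneg : 0 ≤ ∫ x, g x * (f x - m) ^ 2 ∂μ :=
    integral_nonneg fun x ↦ mul_nonneg (hg x) (sq_nonneg _)
  have hg_int : Integrable g μ := integrable_of_integral_eq_one hg_one
  have hdiff : Integrable (fun x ↦ g x * f x ^ 2 - 2 * m * (g x * f x)) μ :=
    hgf2.sub (hgf.const_mul _)
  have expand : ∫ x, g x * (f x - m) ^ 2 ∂μ = ∫ x, g x * f x ^ 2 ∂μ - m ^ 2 := calc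
    ∫ x, g x * (f x - m) ^ 2 ∂μ
      = ∫ x, (g x * f x ^ 2 - 2 * m * (g x * f x) + m ^ 2 * g x) ∂μ := by
        congr with x; ring
    _ = ∫ x, g x * f x ^ 2 ∂μ - 2 * m * m + m ^ 2 * 1 := by
        rw [integral_add hdiff (hg_int.const_mul _), integral_sub hgf2 (hgf.const_mul _),
          integral_const_mul, integral_const_mul, hg_one]
    _ = ∫ x, g x * f x ^ 2 ∂μ - m ^ 2 := by ring
  linarith

end Integral

section Convolution

lemma exists_contDiffBump_seq (E : Type*) [NormedAddCommGroup E] :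
    ∃ φ : ℕ → ContDiffBump (0 : E), Tendsto (fun n ↦ (φ n).rOut) atTop (𝓝 0) ∧
      ∀ n, (φ n).rOut ≤ 2 * (φ n).rIn := by
  have hpos (n : ℕ) : (0 : ℝ) < 1 / (n + 1) := Nat.one_div_pos_of_nat
  refine ⟨fun n ↦ ⟨1 / (n + 1), 2 * (1 / (n + 1)), hpos n, by linarith [hpos n]⟩, ?_,
    fun n ↦ le_rfl⟩
  simpa using (tendsto_one_div_add_atTop_nhds_zero_nat (𝕜 := ℝ)).const_mul 2

variable {E : Type*} [NormedAddCommGroup E] [NormedSpace ℝ E] [FiniteDimensional ℝ E]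
  [MeasurableSpace E] [BorelSpace E] {μ : Measure E} [μ.IsAddHaarMeasure] {g u : E → ℝ}

lemma sq_convolution_le_convolution_sq (hg : Continuous g) (hg_supp : HasCompactSupport g)
    (hg_nonneg : 0 ≤ g) (hg_one : ∫ x, g x ∂μ = 1) (hu : MemLp u 2 μ) (x : E) :
    (g ⋆[lsmul ℝ ℝ, μ] u) x ^ 2 ≤ (g ⋆[lsmul ℝ ℝ, μ] fun y ↦ u y ^ 2) x :=
  sq_integral_mul_le_integral_mul_sq hg_nonneg hg_one
    (hg_supp.convolutionExists_left (lsmul ℝ ℝ) hg (hu.locallyIntegrable one_le_two) x)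
    (hg_supp.convolutionExists_left (lsmul ℝ ℝ) hg hu.integrable_sq.locallyIntegrable x)

lemma memLp_two_convolution_and_integral_sq_le (hg : Continuous g) (hg_supp : HasCompactSupport g)
    (hg_nonneg : 0 ≤ g) (hg_one : ∫ x, g x ∂μ = 1) (hu : MemLp u 2 μ) :
    MemLp (g ⋆[lsmul ℝ ℝ, μ] u) 2 μ ∧
      ∫ x, (g ⋆[lsmul ℝ ℝ, μ] u) x ^ 2 ∂μ ≤ ∫ x, u x ^ 2 ∂μ := by
  have hg_int : Integrable g μ := hg.integrable_of_hasCompactSupport hg_supp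
  have hconv : Integrable (g ⋆[lsmul ℝ ℝ, μ] fun y ↦ u y ^ 2) μ :=
    hg_int.integrable_convolution (lsmul ℝ ℝ) hu.integrable_sq
  have hcont : Continuous (g ⋆[lsmul ℝ ℝ, μ] u) :=
    hg_supp.continuous_convolution_left (lsmul ℝ ℝ) hg (hu.locallyIntegrable one_le_two)
  have hle := sq_convolution_le_convolution_sq hg hg_supp hg_nonneg hg_one hu
  have hsq : Integrable (fun x ↦ (g ⋆[lsmul ℝ ℝ, μ] u) x ^ 2) μ :=
    hconv.mono' (hcont.pow 2).aestronglyMeasurable <| .of_forall fun x ↦ by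
      rw [Real.norm_of_nonneg (sq_nonneg _)]
      exact hle x
  refine ⟨(memLp_two_iff_integrable_sq hcont.aestronglyMeasurable).2 hsq, ?_⟩
  calc ∫ x, (g ⋆[lsmul ℝ ℝ, μ] u) x ^ 2 ∂μ
      ≤ ∫ x, (g ⋆[lsmul ℝ ℝ, μ] fun y ↦ u y ^ 2) x ∂μ := integral_mono hsq hconv hle
    _ = ∫ x, u x ^ 2 ∂μ := by
        rw [integral_convolution (lsmul ℝ ℝ) hg_int hu.integrable_sq, hg_one]
        simp

end Convolution

section WeakDerivative

variable {E : Type*} [NormedAddCommGroup E] [NormedSpace ℝ E]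

lemma continuous_fderiv_apply_const {F : Type*} [NormedAddCommGroup F] [NormedSpace ℝ F]
    {f : E → F} (hf : ContDiff ℝ 1 f) (v : E) :
    Continuous fun x ↦ fderiv ℝ f x v :=
  (hf.continuous_fderiv one_ne_zero).clm_apply continuous_const

variable [MeasurableSpace E] {μ : Measure E} {u w g : E → ℝ} {v : E}

/-- `w` is the weak (distributional) derivative of `u` in the direction `v`. No integrability of
`u` and `w` is built in, so the defining identity is meaningful only for locally integrable `u`
and `w`. -/
def HasWeakLineDeriv (u w : E → ℝ) (v : E) (μ : Measure E) : Prop :=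
  ∀ φ : E → ℝ, ContDiff ℝ ∞ φ → HasCompactSupport φ →
    ∫ x, u x * fderiv ℝ φ x v ∂μ = -∫ x, w x * φ x ∂μ

namespace HasWeakLineDeriv

variable [BorelSpace E]

lemma comp_add_right [μ.IsAddRightInvariant] (h : HasWeakLineDeriv u w v μ) (y : E) :
    HasWeakLineDeriv (fun x ↦ u (x + y)) (fun x ↦ w (x + y)) v μ := by
  intro φ hφ hφ_supp
  have key := h (fun x ↦ φ (x - y)) (hφ.comp (contDiff_id.sub contDiff_const))
    (hφ_supp.comp_homeomorph (Homeomorph.subRight y))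
  rw [← integral_add_right_eq_self _ y, ← integral_add_right_eq_self (fun x ↦ w x * _) y] at key
  simpa only [fderiv_comp_sub, add_sub_cancel_right] using key

variable [FiniteDimensional ℝ E] [μ.IsAddHaarMeasure]

lemma of_contDiff (hu : ContDiff ℝ 1 u) (v : E) :
    HasWeakLineDeriv u (fun x ↦ fderiv ℝ u x v) v μ := by
  intro φ hφ hφ_supp
  have hφ_one : ContDiff ℝ 1 φ := hφ.of_le (mod_cast le_top)
  have hu' := continuous_fderiv_apply_const hu v
  have hφ' := continuous_fderiv_apply_const hφ_one v
  exact integral_mul_fderiv_eq_neg_fderiv_mul_of_integrable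
    ((hu'.mul hφ.continuous).integrable_of_hasCompactSupport hφ_supp.mul_left)
    ((hu.continuous.mul hφ').integrable_of_hasCompactSupport (hφ_supp.fderiv_apply ℝ v).mul_left)
    ((hu.continuous.mul hφ.continuous).integrable_of_hasCompactSupport hφ_supp.mul_left)
    (fun x _ ↦ hu.differentiable one_ne_zero x) (fun x _ ↦ hφ_one.differentiable one_ne_zero x)

lemma fderiv_convolution (h : HasWeakLineDeriv u w v μ) (hu : LocallyIntegrable u μ)
    (hg : ContDiff ℝ ∞ g) (hg_supp : HasCompactSupport g) (x : E) :
    fderiv ℝ (g ⋆[lsmul ℝ ℝ, μ] u) x v = (g ⋆[lsmul ℝ ℝ, μ] w) x := by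
  have hg_one : ContDiff ℝ 1 g := hg.of_le (mod_cast le_top)
  have fderiv_reflect (t : E) : fderiv ℝ (fun t ↦ g (x - t)) t v = -fderiv ℝ g (x - t) v := by
    have := (hg_one.differentiable one_ne_zero (x - t)).hasFDerivAt.comp t
      ((hasFDerivAt_id t).const_sub x)
    rw [show (fun t ↦ g (x - t)) = g ∘ fun t ↦ x - t from rfl, this.fderiv]
    simp
  have hconv := (hg_supp.fderiv ℝ).convolutionExists_left (μ := μ)
    ((lsmul ℝ ℝ : ℝ →L[ℝ] ℝ →L[ℝ] ℝ).precompL E) (hg_one.continuous_fderiv one_ne_zero) hu x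
  calc fderiv ℝ (g ⋆[lsmul ℝ ℝ, μ] u) x v
      = ∫ t, fderiv ℝ g (x - t) v * u t ∂μ := by
        rw [(hg_supp.hasFDerivAt_convolution_left (lsmul ℝ ℝ) hg_one hu x).fderiv,
          convolution_eq_swap, ContinuousLinearMap.integral_apply hconv.integrable_swap]
        simp [ContinuousLinearMap.precompL_apply]
    _ = -∫ t, u t * fderiv ℝ (fun t ↦ g (x - t)) t v ∂μ := by
        simp only [fderiv_reflect, mul_neg, integral_neg, neg_neg, mul_comm]
    _ = ∫ t, w t * g (x - t) ∂μ := by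
        rw [h (fun t ↦ g (x - t)) (hg.comp (contDiff_const.sub contDiff_id))
          (hg_supp.comp_homeomorph (Homeomorph.subLeft x)), neg_neg]
    _ = (g ⋆[lsmul ℝ ℝ, μ] w) x := by
        rw [convolution_lsmul_swap]
        simp only [smul_eq_mul, mul_comm]

end HasWeakLineDeriv

end WeakDerivative

section SoftNorm

variable {E : Type*} [NormedAddCommGroup E] {ε : ℝ}

/-- The smooth approximation `√(‖x‖² + ε²)` of the norm. -/
def softNorm (ε : ℝ) (x : E) : ℝ := √(‖x‖ ^ 2 + ε ^ 2)

lemma norm_le_softNorm (ε : ℝ) (x : E) : ‖x‖ ≤ softNorm ε x :=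
  Real.le_sqrt_of_sq_le (by nlinarith [sq_nonneg ε])

lemma le_softNorm (ε : ℝ) (x : E) : ε ≤ softNorm ε x :=
  Real.le_sqrt_of_sq_le (by nlinarith [sq_nonneg ‖x‖])

lemma softNorm_pos (hε : 0 < ε) (x : E) : 0 < softNorm ε x :=
  hε.trans_le (le_softNorm ε x)

variable [InnerProductSpace ℝ E]

/-- The component in the direction `e` of the vector field `x / √(‖x‖² + ε²)`, a smooth
approximation of the radial unit field. -/
def softRadial (ε : ℝ) (e x : E) : ℝ := ⟪x, e⟫ / softNorm ε x

lemma contDiff_softNorm (hε : 0 < ε) {n : WithTop ℕ∞} : ContDiff ℝ n (softNorm ε : E → ℝ) :=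
  ((contDiff_norm_sq ℝ).add contDiff_const).sqrt fun x ↦ by positivity

lemma hasFDerivAt_softNorm (hε : 0 < ε) (x : E) :
    HasFDerivAt (softNorm ε) ((softNorm ε x)⁻¹ • innerSL ℝ x) x := by
  have h := ((hasStrictFDerivAt_norm_sq x).hasFDerivAt.add_const (ε ^ 2)).sqrt (by positivity)
  have hcoef : (softNorm ε x)⁻¹ • innerSL ℝ x =
      (1 / (2 * √(‖x‖ ^ 2 + ε ^ 2))) • 2 • innerSL ℝ x := by
    ext e
    simp only [softNorm, smul_apply, nsmul_eq_mul, smul_eq_mul]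
    field_simp
    norm_num
  exact hcoef ▸ h

lemma contDiff_softRadial (hε : 0 < ε) (e : E) {n : WithTop ℕ∞} :
    ContDiff ℝ n (softRadial ε e) :=
  (contDiff_id.inner ℝ contDiff_const).div (contDiff_softNorm hε) fun x ↦ (softNorm_pos hε x).ne'

lemma fderiv_softRadial_apply_self (hε : 0 < ε) (e x : E) :
    fderiv ℝ (softRadial ε e) x e = (‖e‖ ^ 2 - softRadial ε e x ^ 2) / softNorm ε x := by
  have hpos := softNorm_pos hε x
  have h : HasFDerivAt (fun x ↦ ⟪x, e⟫ * (softNorm ε x)⁻¹) _ x :=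
    ((hasFDerivAt_id x).inner ℝ (hasFDerivAt_const e x)).mul
      ((hasDerivAt_inv hpos.ne').comp_hasFDerivAt x (hasFDerivAt_softNorm hε x))
  rw [show softRadial ε e = fun x ↦ ⟪x, e⟫ * (softNorm ε x)⁻¹ from
    funext fun x ↦ div_eq_mul_inv _ _, h.fderiv]
  simp only [id_eq, neg_smul, smul_neg, add_apply, neg_apply, smul_apply, coe_innerSL_apply,
    smul_eq_mul, ContinuousLinearMap.comp_apply, ContinuousLinearMap.prod_apply,
    ContinuousLinearMap.id_apply, zero_apply, fderivInnerCLM_apply, inner_zero_right,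
    inner_self_eq_norm_sq_to_K, ringHom_apply, zero_add]
  field_simp
  ring

lemma abs_softRadial_le_norm (hε : 0 < ε) (e x : E) : |softRadial ε e x| ≤ ‖e‖ := by
  have hpos := softNorm_pos hε x
  rw [softRadial, abs_div, abs_of_pos hpos, div_le_iff₀ hpos, mul_comm]
  exact (abs_real_inner_le_norm x e).trans (by gcongr; exact norm_le_softNorm ε x)

lemma abs_fderiv_softRadial_apply_self_le (hε : 0 < ε) (e x : E) :
    |fderiv ℝ (softRadial ε e) x e| ≤ ‖e‖ ^ 2 / ε := by
  have hsq : softRadial ε e x ^ 2 ≤ ‖e‖ ^ 2 :=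
    sq_le_sq.2 <| (abs_softRadial_le_norm hε e x).trans (le_abs_self _)
  have hpos := softNorm_pos hε x
  rw [fderiv_softRadial_apply_self hε, abs_of_nonneg (div_nonneg (sub_nonneg.2 hsq) hpos.le)]
  gcongr
  · exact sub_le_self _ (sq_nonneg _)
  · exact le_softNorm ε x

variable {ι : Type*} [Fintype ι] (b : OrthonormalBasis ι ℝ E)

lemma sum_sq_softRadial_le_one (hε : 0 < ε) (x : E) : ∑ i, softRadial ε (b i) x ^ 2 ≤ 1 := by
  have hpos := softNorm_pos hε x
  simp only [softRadial, div_pow]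
  rw [← Finset.sum_div, b.sum_sq_inner_left, div_le_one (by positivity)]
  gcongr
  exact norm_le_softNorm ε x

lemma finrank_sub_one_div_softNorm_le_sum_fderiv_softRadial (hε : 0 < ε) (x : E) :
    (finrank ℝ E - 1) / softNorm ε x ≤ ∑ i, fderiv ℝ (softRadial ε (b i)) x (b i) := by
  have hpos := softNorm_pos hε x
  simp only [fderiv_softRadial_apply_self hε, b.norm_eq_one, one_pow]
  rw [← Finset.sum_div, Finset.sum_sub_distrib, finrank_eq_card_basis b.toBasis]
  gcongr
  · simp
  · exact sum_sq_softRadial_le_one b hε x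

end SoftNorm

section IntegrationByParts

variable {E : Type*} [NormedAddCommGroup E] [NormedSpace ℝ E] [FiniteDimensional ℝ E]
  [MeasurableSpace E] [BorelSpace E] {μ : Measure E} [μ.IsAddHaarMeasure]

lemma integral_sq_mul_fderiv_le {f F : E → ℝ} {v : E} {C C' : ℝ}
    (hf : ContDiff ℝ 1 f) (hf_L2 : MemLp f 2 μ) (hf'_L2 : MemLp (fun x ↦ fderiv ℝ f x v) 2 μ)
    (hF : ContDiff ℝ 1 F) (hF_le : ∀ x, |F x| ≤ C) (hF'_le : ∀ x, |fderiv ℝ F x v| ≤ C') :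
    ∫ x, f x ^ 2 * fderiv ℝ F x v ∂μ ≤
      ∫ x, f x ^ 2 * F x ^ 2 ∂μ + ∫ x, fderiv ℝ f x v ^ 2 ∂μ := by
  have hf_diff := hf.differentiable one_ne_zero
  have hF_meas := hF.continuous.aestronglyMeasurable (μ := μ)
  have fderiv_sq (x : E) : fderiv ℝ (fun x ↦ f x ^ 2) x v = 2 * f x * fderiv ℝ f x v := by
    simp [((hf_diff x).hasFDerivAt.pow 2).fderiv]
  have hfF : Integrable (fun x ↦ f x ^ 2 * F x) μ :=
    hf_L2.integrable_sq.mul_bdd hF_meas (.of_forall hF_le)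
  have hfF2 : Integrable (fun x ↦ f x ^ 2 * F x ^ 2) μ := by
    simpa only [mul_assoc, ← sq] using hfF.mul_bdd hF_meas (.of_forall hF_le)
  have hfF' : Integrable (fun x ↦ f x ^ 2 * fderiv ℝ F x v) μ :=
    hf_L2.integrable_sq.mul_bdd
      (continuous_fderiv_apply_const hF v).aestronglyMeasurable (.of_forall hF'_le)
  have hf'F : Integrable (fun x ↦ fderiv ℝ (fun x ↦ f x ^ 2) x v * F x) μ := by
    simp only [fderiv_sq, mul_assoc]
    simpa only [Pi.mul_apply, mul_assoc] using
      ((hf_L2.integrable_mul hf'_L2).mul_bdd hF_meas (.of_forall hF_le)).const_mul 2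
  calc ∫ x, f x ^ 2 * fderiv ℝ F x v ∂μ
      = -∫ x, fderiv ℝ (fun x ↦ f x ^ 2) x v * F x ∂μ :=
        integral_mul_fderiv_eq_neg_fderiv_mul_of_integrable hf'F hfF' hfF
          (fun x _ ↦ (hf_diff x).pow 2) (fun x _ ↦ hF.differentiable one_ne_zero x)
    _ = ∫ x, -(fderiv ℝ (fun x ↦ f x ^ 2) x v * F x) ∂μ := (integral_neg _).symm
    _ ≤ ∫ x, (f x ^ 2 * F x ^ 2 + fderiv ℝ f x v ^ 2) ∂μ := by
        refine integral_mono hf'F.neg (hfF2.add hf'_L2.integrable_sq) fun x ↦ ?_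
        simp only [fderiv_sq]
        linarith [sq_nonneg (f x * F x + fderiv ℝ f x v)]
    _ = _ := integral_add hfF2 hf'_L2.integrable_sq

end IntegrationByParts

section CoulombBound

variable {E ι : Type*} [NormedAddCommGroup E] [InnerProductSpace ℝ E] [MeasurableSpace E]
  [BorelSpace E] {μ : Measure E}

lemma integrable_sq_div_softNorm {f : E → ℝ} (hf : MemLp f 2 μ) {ε : ℝ} (hε : 0 < ε) :
    Integrable (fun x ↦ f x ^ 2 / softNorm ε x) μ := by
  have hcont : Continuous fun x : E ↦ (softNorm ε x)⁻¹ :=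
    (contDiff_softNorm hε (n := 0)).continuous.inv₀ fun x ↦ (softNorm_pos hε x).ne'
  refine hf.integrable_sq.mul_bdd (c := ε⁻¹) hcont.aestronglyMeasurable (.of_forall fun x ↦ ?_)
  rw [norm_inv, Real.norm_of_nonneg (softNorm_pos hε x).le]
  exact inv_anti₀ hε (le_softNorm ε x)

variable [FiniteDimensional ℝ E] [μ.IsAddHaarMeasure] [Fintype ι]

lemma finrank_sub_one_mul_integral_sq_div_softNorm_le (b : OrthonormalBasis ι ℝ E) {f : E → ℝ}
    (hf : ContDiff ℝ 1 f) (hf_L2 : MemLp f 2 μ)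
    (hf'_L2 : ∀ i, MemLp (fun x ↦ fderiv ℝ f x (b i)) 2 μ) {ε : ℝ} (hε : 0 < ε) :
    (finrank ℝ E - 1) * ∫ x, f x ^ 2 / softNorm ε x ∂μ ≤
      ∫ x, f x ^ 2 ∂μ + ∑ i, ∫ x, fderiv ℝ f x (b i) ^ 2 ∂μ := by
  have hF (i : ι) : ContDiff ℝ 1 (softRadial ε (b i)) := contDiff_softRadial hε (b i)
  have hF_int (i : ι) : Integrable (fun x ↦ f x ^ 2 * softRadial ε (b i) x ^ 2) μ := by
    refine hf_L2.integrable_sq.mul_bdd (c := 1) ((hF i).continuous.pow 2).aestronglyMeasurable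
      (.of_forall fun x ↦ ?_)
    simpa using abs_softRadial_le_norm hε (b i) x
  have hF'_int (i : ι) : Integrable (fun x ↦ f x ^ 2 * fderiv ℝ (softRadial ε (b i)) x (b i)) μ :=
    hf_L2.integrable_sq.mul_bdd (continuous_fderiv_apply_const (hF i) _).aestronglyMeasurable
      (.of_forall (abs_fderiv_softRadial_apply_self_le hε (b i)))
  calc (finrank ℝ E - 1) * ∫ x, f x ^ 2 / softNorm ε x ∂μ
      = ∫ x, (finrank ℝ E - 1) * (f x ^ 2 / softNorm ε x) ∂μ := (integral_const_mul _ _).symm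
    _ ≤ ∫ x, ∑ i, f x ^ 2 * fderiv ℝ (softRadial ε (b i)) x (b i) ∂μ := by
        refine integral_mono ((integrable_sq_div_softNorm hf_L2 hε).const_mul _)
          (integrable_finsetSum _ fun i _ ↦ hF'_int i) fun x ↦ ?_
        simp only [← Finset.mul_sum, mul_div_left_comm _ (f x ^ 2)]
        gcongr
        exact finrank_sub_one_div_softNorm_le_sum_fderiv_softRadial b hε x
    _ = ∑ i, ∫ x, f x ^ 2 * fderiv ℝ (softRadial ε (b i)) x (b i) ∂μ :=
        integral_finsetSum _ fun i _ ↦ hF'_int i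
    _ ≤ ∑ i, (∫ x, f x ^ 2 * softRadial ε (b i) x ^ 2 ∂μ + ∫ x, fderiv ℝ f x (b i) ^ 2 ∂μ) :=
        Finset.sum_le_sum fun i _ ↦ integral_sq_mul_fderiv_le hf hf_L2 (hf'_L2 i) (hF i)
          (abs_softRadial_le_norm hε (b i)) (abs_fderiv_softRadial_apply_self_le hε (b i))
    _ = ∫ x, ∑ i, f x ^ 2 * softRadial ε (b i) x ^ 2 ∂μ + ∑ i, ∫ x, fderiv ℝ f x (b i) ^ 2 ∂μ := by
        rw [Finset.sum_add_distrib, integral_finsetSum _ fun i _ ↦ hF_int i]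
    _ ≤ _ := by
        gcongr ?_ + _
        refine integral_mono (integrable_finsetSum _ fun i _ ↦ hF_int i) hf_L2.integrable_sq
          fun x ↦ ?_
        simp only [← Finset.mul_sum]
        exact mul_le_of_le_one_right (sq_nonneg _) (sum_sq_softRadial_le_one b hε x)

variable {u : E → ℝ} {w : ι → E → ℝ}

lemma finrank_sub_one_mul_integral_sq_convolution_div_softNorm_le (b : OrthonormalBasis ι ℝ E)
    (hu : MemLp u 2 μ) (hw : ∀ i, MemLp (w i) 2 μ)
    (huw : ∀ i, HasWeakLineDeriv u (w i) (b i) μ) (φ : ContDiffBump (0 : E)) {ε : ℝ}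
    (hε : 0 < ε) :
    (finrank ℝ E - 1) * ∫ x, (φ.normed μ ⋆[lsmul ℝ ℝ, μ] u) x ^ 2 / softNorm ε x ∂μ ≤
      ∫ x, u x ^ 2 ∂μ + ∑ i, ∫ x, w i x ^ 2 ∂μ := by
  have hu_loc : LocallyIntegrable u μ := hu.locallyIntegrable one_le_two
  have fderiv_eq (i : ι) : (fun x ↦ fderiv ℝ (φ.normed μ ⋆[lsmul ℝ ℝ, μ] u) x (b i)) =
      φ.normed μ ⋆[lsmul ℝ ℝ, μ] w i :=
    funext ((huw i).fderiv_convolution hu_loc φ.contDiff_normed φ.hasCompactSupport_normed)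
  have contraction {f : E → ℝ} (hf : MemLp f 2 μ) :=
    memLp_two_convolution_and_integral_sq_le φ.continuous_normed φ.hasCompactSupport_normed
      φ.nonneg_normed φ.integral_normed hf
  refine (finrank_sub_one_mul_integral_sq_div_softNorm_le b
    (φ.hasCompactSupport_normed.contDiff_convolution_left (lsmul ℝ ℝ) φ.contDiff_normed hu_loc)
    (contraction hu).1 (fun i ↦ fderiv_eq i ▸ (contraction (hw i)).1) hε).trans ?_
  refine add_le_add (contraction hu).2 (Finset.sum_le_sum fun i _ ↦ ?_)
  simpa only [← fderiv_eq i] using (contraction (hw i)).2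

theorem integrable_sq_div_norm_and_integral_le (b : OrthonormalBasis ι ℝ E)
    (hE : 1 < finrank ℝ E) (hu : MemLp u 2 μ) (hw : ∀ i, MemLp (w i) 2 μ)
    (huw : ∀ i, HasWeakLineDeriv u (w i) (b i) μ) :
    Integrable (fun x ↦ u x ^ 2 / ‖x‖) μ ∧
      ∫ x, u x ^ 2 / ‖x‖ ∂μ ≤
        (∫ x, u x ^ 2 ∂μ + ∑ i, ∫ x, w i x ^ 2 ∂μ) / (finrank ℝ E - 1) := by
  have hdim : 0 < (finrank ℝ E - 1 : ℝ) := sub_pos.2 (mod_cast hE)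
  have : Nontrivial E := nontrivial_of_finrank_pos (zero_lt_one.trans hE)
  obtain ⟨φ, hφ_zero, hφ_ratio⟩ := exists_contDiffBump_seq E
  obtain ⟨ε, -, hε_pos, hε_zero⟩ := exists_seq_strictAnti_tendsto (0 : ℝ)
  refine integrable_and_integral_le_of_ae_tendsto
    (F := fun n x ↦ (φ n |>.normed μ ⋆[lsmul ℝ ℝ, μ] u) x ^ 2 / softNorm (ε n) x)
    (fun n ↦ integrable_sq_div_softNorm (memLp_two_convolution_and_integral_sq_le
      (φ n).continuous_normed (φ n).hasCompactSupport_normed (φ n).nonneg_normed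
      (φ n).integral_normed hu).1 (hε_pos n))
    (fun n x ↦ div_nonneg (sq_nonneg _) (softNorm_pos (hε_pos n) x).le)
    (fun n ↦ (le_div_iff₀' hdim).2 <|
      finrank_sub_one_mul_integral_sq_convolution_div_softNorm_le b hu hw huw (φ n) (hε_pos n)) ?_
  filter_upwards [ContDiffBump.ae_convolution_tendsto_right_of_locallyIntegrable hφ_zero
    (.of_forall hφ_ratio) (hu.locallyIntegrable one_le_two), Measure.ae_ne μ 0] with x hx hx_ne
  have softNorm_tendsto : Tendsto (fun n ↦ softNorm (ε n) x) atTop (𝓝 ‖x‖) := by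
    have h := ((hε_zero.pow 2).const_add (‖x‖ ^ 2)).sqrt
    rwa [zero_pow two_ne_zero, add_zero, Real.sqrt_sq (norm_nonneg x)] at h
  exact (hx.pow 2).div softNorm_tendsto (norm_ne_zero_iff.2 hx_ne)

end CoulombBound

section CoulombPotential

/-- The Coulomb potential `x ↦ ∫ ρ(y) / ‖x - y‖ dμ(y)` of the charge density `ρ`. It takes the
junk value `0` at the points `x` where the integral diverges. -/
def coulombPotential {E : Type*} [NormedAddCommGroup E] [MeasurableSpace E] (ρ : E → ℝ)
    (μ : Measure E) (x : E) : ℝ :=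
  ∫ y, ρ y / ‖x - y‖ ∂μ

section NormedGroup

variable {E : Type*} [NormedAddCommGroup E] [MeasurableSpace E] {μ : Measure E} {ρ : E → ℝ}

lemma coulombPotential_nonneg (hρ : 0 ≤ ρ) (x : E) : 0 ≤ coulombPotential ρ μ x :=
  integral_nonneg fun y ↦ div_nonneg (hρ y) (norm_nonneg _)

lemma aestronglyMeasurable_coulombPotential [BorelSpace E] [SecondCountableTopology E] [SFinite μ]
    (hρ : AEMeasurable ρ μ) : AEStronglyMeasurable (coulombPotential ρ μ) μ := by
  have hdist : Measurable fun p : E × E ↦ ‖p.1 - p.2‖ := by fun_prop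
  exact (hρ.comp_snd.div hdist.aemeasurable).aestronglyMeasurable.integral_prod_right'

lemma integral_div_two_mul_radius_le_coulombPotential [NullSingletonClass μ] (hρ : 0 ≤ ρ)
    {R : ℝ} (hρ_supp : support ρ ⊆ closedBall 0 R) {x : E} (hx : x ∈ closedBall 0 R)
    (hx_int : Integrable (fun y ↦ ρ y / ‖x - y‖) μ) :
    (∫ y, ρ y ∂μ) / (2 * R) ≤ coulombPotential ρ μ x := by
  rw [mem_closedBall_zero_iff] at hx
  have hR : 0 ≤ R := (norm_nonneg x).trans hx
  rw [← integral_div]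
  refine integral_mono_of_nonneg (.of_forall fun y ↦ div_nonneg (hρ y) (by positivity)) hx_int ?_
  filter_upwards [Measure.ae_ne μ x] with y hy
  by_cases hy_supp : y ∈ support ρ
  · have hy_norm : ‖y‖ ≤ R := mem_closedBall_zero_iff.1 (hρ_supp hy_supp)
    have hdist_pos : 0 < ‖x - y‖ := norm_sub_pos_iff.2 hy.symm
    have hdist_le : ‖x - y‖ ≤ 2 * R := (norm_sub_le x y).trans (by linarith)
    exact div_le_div_of_nonneg_left (hρ y) hdist_pos hdist_le
  · simp [notMem_support.1 hy_supp]

end NormedGroup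

theorem integrable_sq_div_norm_sub_and_coulombPotential_le {E ι : Type*} [NormedAddCommGroup E]
    [InnerProductSpace ℝ E] [FiniteDimensional ℝ E] [MeasurableSpace E] [BorelSpace E]
    {μ : Measure E} [μ.IsAddHaarMeasure] [Fintype ι] (b : OrthonormalBasis ι ℝ E)
    (hE : 1 < finrank ℝ E) {u : E → ℝ} {w : ι → E → ℝ} (hu : MemLp u 2 μ)
    (hw : ∀ i, MemLp (w i) 2 μ) (huw : ∀ i, HasWeakLineDeriv u (w i) (b i) μ) (x : E) :
    Integrable (fun y ↦ u y ^ 2 / ‖x - y‖) μ ∧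
      coulombPotential (fun y ↦ u y ^ 2) μ x ≤
        (∫ y, u y ^ 2 ∂μ + ∑ i, ∫ y, w i y ^ 2 ∂μ) / (finrank ℝ E - 1) := by
  have hshift := measurePreserving_add_right μ x
  obtain ⟨hint, hle⟩ := integrable_sq_div_norm_and_integral_le b hE
    (hu.comp_measurePreserving hshift) (fun i ↦ (hw i).comp_measurePreserving hshift)
    fun i ↦ (huw i).comp_add_right x
  have integral_sq_shift (f : E → ℝ) : ∫ y, f (y + x) ^ 2 ∂μ = ∫ y, f y ^ 2 ∂μ :=
    integral_add_right_eq_self (fun y ↦ f y ^ 2) x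
  simp only [comp_apply, integral_sq_shift] at hint hle
  have key (y : E) : u (y + x) ^ 2 / ‖y‖ = u (y + x) ^ 2 / ‖x - (y + x)‖ := by
    simp
  simp only [key] at hint hle
  rw [integral_add_right_eq_self (fun y ↦ u y ^ 2 / ‖x - y‖) x] at hle
  refine ⟨?_, hle⟩
  simpa using hint.comp_add_right (-x)

end CoulombPotential

section L2Dilation

variable {E : Type*} [NormedAddCommGroup E] [NormedSpace ℝ E] {R : ℝ} {f : E → ℝ}

/-- The dilation `x ↦ R ^ (-d / 2) * f (x / R)` of a function on a `d`-dimensional space,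
normalised so as to preserve the `L²` norm. -/
def l2Dilation (R : ℝ) (f : E → ℝ) (x : E) : ℝ :=
  √((R ^ finrank ℝ E)⁻¹) * f (R⁻¹ • x)

lemma contDiff_l2Dilation {n : WithTop ℕ∞} (hf : ContDiff ℝ n f) (R : ℝ) :
    ContDiff ℝ n (l2Dilation R f) :=
  contDiff_const.mul (hf.comp (contDiff_id.const_smul _))

lemma fderiv_l2Dilation_apply (R : ℝ) (f : E → ℝ) (x v : E) :
    fderiv ℝ (l2Dilation R f) x v = R⁻¹ * l2Dilation R (fun y ↦ fderiv ℝ f y v) x := by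
  have h : l2Dilation R f = √((R ^ finrank ℝ E)⁻¹) • fun x ↦ f (R⁻¹ • x) := rfl
  rw [h, fderiv_const_smul_field, Pi.smul_apply, fderiv_comp_smul]
  simp [l2Dilation, mul_left_comm]

lemma support_l2Dilation_subset (hR : 0 < R) {r : ℝ} (hf : support f ⊆ closedBall 0 r) :
    support (l2Dilation R f) ⊆ closedBall 0 (R * r) := by
  intro x hx
  have hx_dist := hf (right_ne_zero_of_mul (mem_support.1 hx))
  rwa [mem_closedBall_zero_iff, norm_smul, norm_inv, Real.norm_of_nonneg hR.le,
    inv_mul_le_iff₀ hR, ← mem_closedBall_zero_iff] at hx_dist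

variable [FiniteDimensional ℝ E] [MeasurableSpace E] [BorelSpace E] (μ : Measure E)
  [μ.IsAddHaarMeasure]

lemma integral_sq_l2Dilation (hR : 0 < R) (f : E → ℝ) :
    ∫ x, l2Dilation R f x ^ 2 ∂μ = ∫ x, f x ^ 2 ∂μ := by
  have hRd : 0 < R ^ finrank ℝ E := pow_pos hR _
  simp only [l2Dilation, mul_pow, Real.sq_sqrt (inv_pos.2 hRd).le]
  rw [integral_const_mul, Measure.integral_comp_inv_smul_of_nonneg μ (fun x ↦ f x ^ 2) hR.le,
    smul_eq_mul, inv_mul_cancel_left₀ hRd.ne']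

lemma integral_sq_fderiv_l2Dilation (hR : 0 < R) (f : E → ℝ) (v : E) :
    ∫ x, fderiv ℝ (l2Dilation R f) x v ^ 2 ∂μ = (∫ x, fderiv ℝ f x v ^ 2 ∂μ) / R ^ 2 := by
  simp only [fderiv_l2Dilation_apply, mul_pow, integral_const_mul, integral_sq_l2Dilation μ hR]
  rw [inv_pow, inv_mul_eq_div]

lemma exists_contDiff_integral_sq_eq_one :
    ∃ f : E → ℝ, ContDiff ℝ ∞ f ∧ support f ⊆ closedBall 0 1 ∧ ∫ x, f x ^ 2 ∂μ = 1 := by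
  let φ : ContDiffBump (0 : E) := ⟨1 / 2, 1, by norm_num, by norm_num⟩
  have hφ_pos : 0 < ∫ x, φ x ^ 2 ∂μ := by
    refine (φ.continuous.pow 2).integral_pos_of_hasCompactSupport_nonneg_nonzero (x := 0)
      (φ.hasCompactSupport.comp_left (g := (· ^ 2)) (by simp)) (fun x ↦ sq_nonneg _) ?_
    simp [φ.one_of_mem_closedBall (mem_closedBall_self φ.rIn_pos.le)]
  refine ⟨fun x ↦ φ x / √(∫ x, φ x ^ 2 ∂μ), φ.contDiff.div_const _, fun x hx ↦ ?_, ?_⟩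
  · have hx_supp : x ∈ support φ := (div_ne_zero_iff.1 hx).1
    rw [φ.support_eq] at hx_supp
    exact ball_subset_closedBall hx_supp
  · simp only [div_pow, Real.sq_sqrt hφ_pos.le]
    rw [integral_div, div_self hφ_pos.ne']

end L2Dilation

section Pekar

variable {u : EuclideanSpace ℝ (Fin 3) → ℝ} {u' : Fin 3 → EuclideanSpace ℝ (Fin 3) → ℝ}

namespace IsNormalizedH1

lemma of_contDiff (hu : ContDiff ℝ 1 u) (hu_supp : HasCompactSupport u)
    (hu_one : ∫ x, u x ^ 2 = 1) :
    IsNormalizedH1 u fun i x ↦ fderiv ℝ u x (EuclideanSpace.single i 1) :=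
  ⟨hu.continuous.memLp_of_hasCompactSupport hu_supp,
    fun _ ↦ (continuous_fderiv_apply_const hu _).memLp_of_hasCompactSupport
      (hu_supp.fderiv_apply ℝ _),
    fun _ ↦ HasWeakLineDeriv.of_contDiff hu _, hu_one⟩

lemma pekarFunctional_eq (h : IsNormalizedH1 u u') :
    pekarFunctional u u' = (∑ i, ∫ x, u' i x ^ 2) -
      1 / (4 * π) * ∫ x, u x ^ 2 * coulombPotential (fun y ↦ u y ^ 2) volume x := by
  simp only [pekarFunctional, coulombPotential, mul_div_assoc, integral_const_mul]
  rw [integral_finsetSum _ fun i _ ↦ (h.2.1 i).integrable_sq]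

lemma integrable_sq_div_norm_sub_and_coulombPotential_le (h : IsNormalizedH1 u u')
    (x : EuclideanSpace ℝ (Fin 3)) :
    Integrable (fun y ↦ u y ^ 2 / ‖x - y‖) ∧
      coulombPotential (fun y ↦ u y ^ 2) volume x ≤ (1 + ∑ i, ∫ y, u' i y ^ 2) / 2 := by
  obtain ⟨hu, hu', huu', hu_one⟩ := h
  have hweak (i : Fin 3) : HasWeakLineDeriv u (u' i) (EuclideanSpace.basisFun (Fin 3) ℝ i) volume :=
    (EuclideanSpace.basisFun_apply (Fin 3) ℝ i).symm ▸ huu' i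
  have hdim : (finrank ℝ (EuclideanSpace ℝ (Fin 3)) : ℝ) - 1 = 2 := by
    rw [finrank_euclideanSpace_fin]; norm_num
  simpa only [hu_one, hdim] using _root_.integrable_sq_div_norm_sub_and_coulombPotential_le
    (EuclideanSpace.basisFun (Fin 3) ℝ) (by simp) hu hu' hweak x

lemma integrable_sq_mul_coulombPotential (h : IsNormalizedH1 u u') :
    Integrable fun x ↦ u x ^ 2 * coulombPotential (fun y ↦ u y ^ 2) volume x := by
  refine h.1.integrable_sq.mul_bdd (c := (1 + ∑ i, ∫ y, u' i y ^ 2) / 2)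
    (aestronglyMeasurable_coulombPotential h.1.integrable_sq.1.aemeasurable) (.of_forall fun x ↦ ?_)
  rw [Real.norm_of_nonneg (coulombPotential_nonneg (fun y ↦ sq_nonneg (u y)) x)]
  exact (h.integrable_sq_div_norm_sub_and_coulombPotential_le x).2

theorem neg_one_div_le_pekarFunctional (h : IsNormalizedH1 u u') :
    -(1 / (8 * π)) ≤ pekarFunctional u u' := by
  set T := ∑ i, ∫ x, u' i x ^ 2
  have hT_nonneg : 0 ≤ T := Finset.sum_nonneg fun i _ ↦ integral_nonneg fun x ↦ sq_nonneg _
  have coulomb_le : ∫ x, u x ^ 2 * coulombPotential (fun y ↦ u y ^ 2) volume x ≤ (1 + T) / 2 := calc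
    ∫ x, u x ^ 2 * coulombPotential (fun y ↦ u y ^ 2) volume x
      ≤ ∫ x, u x ^ 2 * ((1 + T) / 2) :=
        integral_mono h.integrable_sq_mul_coulombPotential (h.1.integrable_sq.mul_const _) fun x ↦
          mul_le_mul_of_nonneg_left (h.integrable_sq_div_norm_sub_and_coulombPotential_le x).2
            (sq_nonneg _)
    _ = (1 + T) / 2 := by rw [integral_mul_const, h.2.2.2, one_mul]
  have hπ : 1 / (8 * π) ≤ 1 := (div_le_one (by positivity)).2 (by linarith [pi_gt_three])
  calc -(1 / (8 * π)) ≤ -(1 / (8 * π)) + (1 - 1 / (8 * π)) * T :=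
        le_add_of_nonneg_right (mul_nonneg (sub_nonneg.2 hπ) hT_nonneg)
    _ = T - 1 / (4 * π) * ((1 + T) / 2) := by field_simp; ring
    _ ≤ pekarFunctional u u' := by rw [h.pekarFunctional_eq]; gcongr

theorem pekarFunctional_le_of_support_subset (h : IsNormalizedH1 u u') {R : ℝ}
    (hu_supp : support u ⊆ closedBall 0 R) :
    pekarFunctional u u' ≤ (∑ i, ∫ x, u' i x ^ 2) - 1 / (8 * π * R) := by
  have hsq_supp : support (fun x ↦ u x ^ 2) ⊆ closedBall 0 R := by
    rwa [support_pow u two_ne_zero]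
  have le_coulomb : 1 / (2 * R) ≤
      ∫ x, u x ^ 2 * coulombPotential (fun y ↦ u y ^ 2) volume x := calc
    1 / (2 * R) = ∫ x, u x ^ 2 * (1 / (2 * R)) := by rw [integral_mul_const, h.2.2.2, one_mul]
    _ ≤ _ := by
      refine integral_mono (h.1.integrable_sq.mul_const _) h.integrable_sq_mul_coulombPotential
        fun x ↦ ?_
      by_cases hx : x ∈ support u
      · have potential_ge := integral_div_two_mul_radius_le_coulombPotential
          (fun y ↦ sq_nonneg (u y)) hsq_supp (hu_supp hx)
          (h.integrable_sq_div_norm_sub_and_coulombPotential_le x).1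
        rw [h.2.2.2] at potential_ge
        exact mul_le_mul_of_nonneg_left potential_ge (sq_nonneg _)
      · simp [notMem_support.1 hx]
  calc pekarFunctional u u' ≤ (∑ i, ∫ x, u' i x ^ 2) - 1 / (4 * π) * (1 / (2 * R)) := by
        rw [h.pekarFunctional_eq]; gcongr
    _ = _ := by rw [one_div_mul_one_div]; ring_nf

end IsNormalizedH1

theorem exists_isNormalizedH1_pekarFunctional_neg :
    ∃ (u : EuclideanSpace ℝ (Fin 3) → ℝ) (u' : Fin 3 → EuclideanSpace ℝ (Fin 3) → ℝ),
      IsNormalizedH1 u u' ∧ pekarFunctional u u' < 0 := by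
  obtain ⟨f, hf, hf_supp, hf_one⟩ :=
    exists_contDiff_integral_sq_eq_one (volume : Measure (EuclideanSpace ℝ (Fin 3)))
  set T := ∑ i, ∫ x, fderiv ℝ f x (EuclideanSpace.single i 1) ^ 2
  have : 0 ≤ T := Finset.sum_nonneg fun i _ ↦ integral_nonneg fun x ↦ sq_nonneg _
  set R := 8 * π * T + 1
  have hR : 0 < R := by positivity
  have hu_supp : support (l2Dilation R f) ⊆ closedBall 0 R := by
    simpa only [mul_one] using support_l2Dilation_subset hR hf_supp
  have hu : IsNormalizedH1 (l2Dilation R f) _ := .of_contDiff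
    (contDiff_l2Dilation (hf.of_le (mod_cast le_top)) R)
    (.of_support_subset_isCompact (isCompact_closedBall 0 R) hu_supp)
    ((integral_sq_l2Dilation volume hR f).trans hf_one)
  have kinetic : ∑ i, ∫ x, fderiv ℝ (l2Dilation R f) x (EuclideanSpace.single i 1) ^ 2 =
      T / R ^ 2 := by
    simp only [integral_sq_fderiv_l2Dilation volume hR, ← Finset.sum_div, T]
  refine ⟨_, _, hu, ?_⟩
  calc pekarFunctional (l2Dilation R f) _
      ≤ T / R ^ 2 - 1 / (8 * π * R) :=
        kinetic ▸ hu.pekarFunctional_le_of_support_subset hu_supp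
    _ = (T - R / (8 * π)) / R ^ 2 := by field_simp
    _ < 0 := by
        refine div_neg_of_neg_of_pos (sub_neg.2 ?_) (by positivity)
        rw [lt_div_iff₀ (by positivity)]
        linarith

end Pekar

/-- There is a normalized `u ∈ H¹(ℝ³;ℝ)` with `ℰ(u) < 0`; in
particular the Pekar energy `e^{Pek} = inf ℰ` is negative. -/
theorem statement5 :
    (∃ (u : EuclideanSpace ℝ (Fin 3) → ℝ)
       (u' : Fin 3 → EuclideanSpace ℝ (Fin 3) → ℝ),
        IsNormalizedH1 u u' ∧ pekarFunctional u u' < 0) ∧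
    sInf { e : ℝ | ∃ (u : EuclideanSpace ℝ (Fin 3) → ℝ)
       (u' : Fin 3 → EuclideanSpace ℝ (Fin 3) → ℝ),
        IsNormalizedH1 u u' ∧ e = pekarFunctional u u' } < 0 := by
  obtain ⟨u, u', hu, hu_neg⟩ := exists_isNormalizedH1_pekarFunctional_neg
  refine ⟨⟨u, u', hu, hu_neg⟩, csInf_lt_of_lt ?_ ⟨u, u', hu, rfl⟩ hu_neg⟩
  refine ⟨-(1 / (8 * π)), ?_⟩
  rintro e ⟨v, v', hv, rfl⟩
  exact hv.neg_one_div_le_pekarFunctional
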